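/- arXiv:2203.07592 — 2 statements merged into one kernel-verified Lean document; each statement's English description precedes it below -/
import Mathlib

section
/- Let G be a finite p-group and N a normal subgroup of G with N ≤ Φ(G). If N contains no abelian G-invariant subgroup isomorphic to C_p × C_p, then N is cyclic. -/
/-- `G` is a minimal non-abelian group: non-abelian, but all proper subgroups abelian. -/
def IsMinimalNonabelian (G : Type*) [Group G] : Prop :=
  (¬ ∀ a b : G, a * b = b * a) ∧
    ∀ H : Subgroup G, H ≠ ⊤ → ∀ a ∈ H, ∀ b ∈ H, a * b = b * a

/-- `G` is an `𝒜_t`-group: it has a non-abelian subgroup of index `p ^ (t-1)`,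
but all subgroups of index `p ^ t` are abelian. -/
def IsAGroup (p t : ℕ) (G : Type*) [Group G] : Prop :=
  (∃ H : Subgroup G, H.index = p ^ (t - 1) ∧ ¬ ∀ a ∈ H, ∀ b ∈ H, a * b = b * a) ∧
    ∀ H : Subgroup G, H.index = p ^ t → ∀ a ∈ H, ∀ b ∈ H, a * b = b * a

theorem aux_card_comap {G : Type*} [Group G] [Finite G] (Z : Subgroup G) [Z.Normal]
    (E : Subgroup (G ⧸ Z)) :
    Nat.card (E.comap (QuotientGroup.mk' Z)) = Nat.card Z * Nat.card E := by
  have h1 := Subgroup.card_mul_index (E.comap (QuotientGroup.mk' Z))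
  have h2 := Subgroup.card_mul_index Z
  have h3 := Subgroup.card_mul_index E
  rw [Subgroup.index_comap_of_surjective _ (QuotientGroup.mk'_surjective Z)] at h1
  have h4 : Nat.card (G ⧸ Z) = Z.index := rfl
  have h5 : 0 < E.index := Nat.pos_of_ne_zero Subgroup.index_ne_zero_of_finite
  apply Nat.eq_of_mul_eq_mul_right h5
  rw [h1, ← h2, ← h4, ← h3, mul_assoc]

theorem aux_central {p : ℕ} [hp : Fact p.Prime] {G : Type*} [Group G] [Finite G]
    (hG : IsPGroup p G) (N : Subgroup G) [N.Normal] (hN : p ∣ Nat.card N) :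
    ∃ Z : Subgroup G, Z ≤ N ∧ Z ≤ Subgroup.center G ∧ Nat.card Z = p := by
  have hG' : IsPGroup p (ConjAct G) := hG.of_equiv ConjAct.toConjAct
  obtain ⟨b, hb, hb1⟩ := hG'.exists_fixed_point_of_prime_dvd_card_of_fixed_point N hN
    (a := 1) (by intro g; simp)
  have hbc : (b : G) ∈ Subgroup.center G := by
    rw [← SetLike.mem_coe, ← ConjAct.fixedPoints_eq_center]
    intro g
    have := hb g
    rw [← ConjAct.Subgroup.val_conj_smul, this]
  have hb1' : (b : G) ≠ 1 := fun h => hb1 (Subtype.ext h.symm)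
  have hd := hG.dvd_orderOf hb1'
  rw [← Nat.card_zpowers] at hd
  obtain ⟨c, hc⟩ := exists_prime_orderOf_dvd_card' p hd
  refine ⟨Subgroup.zpowers (c : G), ?_, ?_, ?_⟩
  · rw [Subgroup.zpowers_le]
    exact (Subgroup.zpowers_le.2 b.2) c.2
  · rw [Subgroup.zpowers_le]
    exact (Subgroup.zpowers_le.2 hbc) c.2
  · rw [Nat.card_zpowers, Subgroup.orderOf_coe, hc]

theorem aux_normal_of_le_center {G : Type*} [Group G] {Z : Subgroup G}
    (h : Z ≤ Subgroup.center G) : Z.Normal :=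
  ⟨fun n hn g => by rw [← Subgroup.mem_center_iff.1 (h hn) g |>.symm]; simpa [mul_assoc] using hn⟩

theorem aux_map_card {G : Type*} [Group G] [Finite G] (Z N : Subgroup G) [Z.Normal] (h : Z ≤ N) :
    Nat.card N = Nat.card Z * Nat.card (N.map (QuotientGroup.mk' Z)) := by
  rw [← aux_card_comap, Subgroup.comap_map_eq_self]
  simpa using h

theorem aux_sq {p : ℕ} [hp : Fact p.Prime] {G : Type*} [Group G] [Finite G]
    (hG : IsPGroup p G) (N : Subgroup G) [hN : N.Normal] (hd : p ^ 2 ∣ Nat.card N) :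
    ∃ M : Subgroup G, M ≤ N ∧ M.Normal ∧ Nat.card M = p ^ 2 := by
  obtain ⟨Z, hZN, hZc, hZ⟩ := aux_central hG N ((dvd_pow_self p two_ne_zero).trans hd)
  have := aux_normal_of_le_center hZc
  have hm : (N.map (QuotientGroup.mk' Z)).Normal :=
    hN.map _ (QuotientGroup.mk'_surjective Z)
  have hc := aux_map_card Z N hZN
  rw [hc, hZ, sq] at hd
  have hd' := Nat.dvd_of_mul_dvd_mul_left hp.out.pos hd
  obtain ⟨Y, hYN, hYc, hY⟩ := aux_central (hG.to_quotient Z) _ hd'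
  have := aux_normal_of_le_center hYc
  refine ⟨Y.comap (QuotientGroup.mk' Z), ?_, inferInstance, ?_⟩
  · refine (Subgroup.comap_mono hYN).trans ?_
    rw [Subgroup.comap_map_eq_self]
    simpa using hZN
  · rw [aux_card_comap, hZ, hY, sq]

theorem aux_omega {p : ℕ} [hp : Fact p.Prime] {G : Type*} [Group G] [Finite G]
    (hG : IsPGroup p G) (K Ω : Subgroup G) [Ω.Normal] (hK : Ω ≤ K)
    (hΩ : ∀ x ∈ Ω, x ^ p = 1) (hd : p ^ 2 ∣ Nat.card Ω) :
    ∃ M : Subgroup G, M ≤ K ∧ M.Normal ∧ Nat.card M = p ^ 2 ∧ ¬ IsCyclic M := by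
  obtain ⟨M, hM, hMn, hMc⟩ := aux_sq hG Ω hd
  refine ⟨M, hM.trans hK, hMn, hMc, fun hcyc => ?_⟩
  obtain ⟨g, hg⟩ := hcyc.exists_generator
  have h1 := orderOf_eq_card_of_forall_mem_zpowers hg
  have h2 : g ^ p = 1 := Subtype.ext (hΩ g (hM g.2))
  have h3 := Nat.le_of_dvd hp.out.pos (orderOf_dvd_of_pow_eq_one h2)
  rw [h1, hMc] at h3
  nlinarith [hp.out.one_lt]

theorem aux_coatom {G : Type*} [Group G] [Finite G] (C : Subgroup G)
    (hC : C.index.Prime) : IsCoatom C := by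
  refine ⟨fun h => ?_, fun D hD => ?_⟩
  · rw [h, Subgroup.index_top] at hC
    exact Nat.not_prime_one hC
  · have h := Subgroup.relIndex_mul_index hD.le
    rcases (Nat.dvd_prime hC).1 (Dvd.intro_left _ h) with h1 | h1
    · exact Subgroup.index_eq_one.1 h1
    · rw [h1] at h
      have h2 : C.relIndex D = 1 :=
        Nat.eq_of_mul_eq_mul_right hC.pos (by rw [h, one_mul])
      exact absurd (Subgroup.relIndex_eq_one.1 h2) (not_le_of_gt hD)

theorem aux_frattini {p : ℕ} [hp : Fact p.Prime] {G : Type*} [Group G] [Finite G]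
    (hG : IsPGroup p G) (M : Subgroup G) [hMn : M.Normal] (hM : Nat.card M = p ^ 2)
    (hc : IsCyclic M) : ∀ g ∈ frattini G, ∀ m ∈ M, g * m = m * g := by
  let φ : G →* MulAut M := MulAut.conjNormal
  have hk : ∀ g ∈ φ.ker, ∀ m ∈ M, g * m = m * g := by
    intro g hg m hm
    have h1 : φ g = 1 := hg
    have h2 := MulAut.conjNormal_apply g (⟨m, hm⟩ : M)
    change ((φ g ⟨m, hm⟩ : M) : G) = _ at h2
    rw [h1] at h2
    simp only [MulAut.one_apply] at h2
    rw [eq_mul_inv_iff_mul_eq] at h2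
    exact h2.symm
  suffices h : frattini G ≤ φ.ker from fun g hg => hk g (h hg)
  have hi : φ.ker.index ∣ p * (p - 1) := by
    have h1 : φ.ker.index ∣ Nat.card (MulAut M) := by
      rw [Subgroup.index_ker]; exact Subgroup.card_subgroup_dvd_card _
    rw [IsCyclic.card_mulAut, hM, Nat.totient_prime_pow hp.out two_pos] at h1
    simpa using h1
  obtain ⟨n, hn⟩ := hG.index φ.ker
  rw [hn] at hi
  have hcop : Nat.Coprime (p ^ n) (p - 1) := by
    apply Nat.Coprime.pow_left
    rw [Nat.Prime.coprime_iff_not_dvd hp.out]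
    intro h
    have := Nat.le_of_dvd (by have := hp.out.one_lt; omega) h
    have := hp.out.one_lt
    omega
  have hi' := hcop.dvd_of_dvd_mul_right hi
  rcases (Nat.dvd_prime hp.out).1 hi' with h1 | h1
  · rw [h1, Subgroup.index_eq_one] at hn
    rw [hn]; exact le_top
  · exact frattini_le_coatom (aux_coatom _ (by rw [hn, h1]; exact hp.out))

/-- The elements of order dividing `p` in a commutative subgroup. -/
def auxOmega {G : Type*} [Group G] (p : ℕ) (K : Subgroup G)
    (hK : ∀ x ∈ K, ∀ y ∈ K, x * y = y * x) : Subgroup G where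
  carrier := {x | x ∈ K ∧ x ^ p = 1}
  one_mem' := ⟨K.one_mem, one_pow p⟩
  mul_mem' := fun {a b} ha hb => ⟨K.mul_mem ha.1 hb.1, by
    have h : Commute a b := hK a ha.1 b hb.1
    rw [h.mul_pow, ha.2, hb.2, one_mul]⟩
  inv_mem' := fun {a} ha => ⟨K.inv_mem ha.1, by rw [inv_pow, ha.2, inv_one]⟩

theorem auxOmega_normal {G : Type*} [Group G] (p : ℕ) (K : Subgroup G) [hn : K.Normal]
    (hK : ∀ x ∈ K, ∀ y ∈ K, x * y = y * x) : (auxOmega p K hK).Normal :=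
  ⟨fun n h g => ⟨hn.conj_mem n h.1 g, by rw [conj_pow, h.2]; simp⟩⟩

theorem aux_main {p : ℕ} [hp : Fact p.Prime] (n : ℕ) : ∀ {G : Type*} [Group G] [Finite G],
    Nat.card G = n → IsPGroup p G → ∀ (N : Subgroup G), N.Normal → N ≤ frattini G →
    ¬ IsCyclic N →
    ∃ E : Subgroup G, E ≤ N ∧ E.Normal ∧ Nat.card E = p ^ 2 ∧ ¬ IsCyclic E := by
  induction n using Nat.strong_induction_on with
  | _ n ih =>
  intro G _ _ hn hG N hN hNΦ hNc
  have hpN : p ∣ Nat.card N := by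
    rcases (hG.to_subgroup N).card_eq_or_dvd with h | h
    · have := (Nat.card_eq_one_iff_unique.1 h).1
      exact absurd isCyclic_of_subsingleton hNc
    · exact h
  obtain ⟨Z, hZN, hZc, hZ⟩ := aux_central hG N hpN
  have hZn := aux_normal_of_le_center hZc
  let π := QuotientGroup.mk' Z
  have hπ : Function.Surjective π := QuotientGroup.mk'_surjective Z
  have hNm : (N.map π).Normal := hN.map _ hπ
  by_cases hcyc : IsCyclic (N.map π)
  · -- the quotient is cyclic
    obtain ⟨⟨_, g, hgN, rfl⟩, hg⟩ := hcyc.exists_generator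
    have hrep : ∀ x ∈ N, ∃ k : ℤ, ∃ z ∈ Z, x = g ^ k * z := by
      intro x hx
      obtain ⟨k, hk⟩ := Subgroup.mem_zpowers_iff.1 (hg ⟨π x, x, hx, rfl⟩)
      have hk' : π g ^ k = π x := congrArg Subtype.val hk
      rw [← map_zpow] at hk'
      refine ⟨k, (g ^ k)⁻¹ * x, ?_, by group⟩
      exact QuotientGroup.eq.1 hk'
    have hcomm : ∀ x ∈ N, ∀ y ∈ N, x * y = y * x := by
      intro x hx y hy
      obtain ⟨k, z, hz, rfl⟩ := hrep x hx
      obtain ⟨l, w, hw, rfl⟩ := hrep y hy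
      have h1 : ∀ u, Commute u z := fun u => Subgroup.mem_center_iff.1 (hZc hz) u
      have h2 : ∀ u, Commute u w := fun u => Subgroup.mem_center_iff.1 (hZc hw) u
      have h3 : Commute (g ^ k) (g ^ l) := Commute.zpow_zpow_self g k l
      exact ((h3.mul_left (h1 _).symm).mul_right (h2 _)).eq
    have hΩn := auxOmega_normal p N hcomm
    refine aux_omega hG N (auxOmega p N hcomm) (fun x hx => hx.1) (fun x hx => hx.2) ?_
    have hZg : ¬ Z ≤ Subgroup.zpowers g := by
      intro hle
      apply hNc
      refine ⟨⟨⟨g, hgN⟩, fun ⟨x, hx⟩ => ?_⟩⟩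
      obtain ⟨k, z, hz, rfl⟩ := hrep x hx
      obtain ⟨l, hl⟩ := Subgroup.mem_zpowers_iff.1 (hle hz)
      refine ⟨k + l, Subtype.ext ?_⟩
      simp [zpow_add, hl]
    have hZp : ∀ z ∈ Z, z ^ p = 1 := by
      intro z hz
      have : (⟨z, hz⟩ : Z) ^ p = 1 := by rw [← hZ]; exact pow_card_eq_one'
      exact congrArg Subtype.val this
    have hZΩ : Z ≤ auxOmega p N hcomm := fun z hz => ⟨hZN hz, hZp z hz⟩
    have hg1 : g ≠ 1 := by
      rintro rfl
      apply hNc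
      have hNZ : N = Z := le_antisymm (fun x hx => by
        obtain ⟨k, z, hz, rfl⟩ := hrep x hx
        simpa using hz) hZN
      rw [hNZ]
      exact isCyclic_of_prime_card hZ
    have hd := hG.dvd_orderOf hg1
    rw [← Nat.card_zpowers] at hd
    obtain ⟨c, hc⟩ := exists_prime_orderOf_dvd_card' p hd
    have hcZ : (c : G) ∉ Z := by
      intro hcZ
      apply hZg
      have h1 : Subgroup.zpowers (c : G) ≤ Z := Subgroup.zpowers_le.2 hcZ
      have h2 : Subgroup.zpowers (c : G) = Z := Subgroup.eq_of_le_of_card_ge h1 (by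
        rw [Nat.card_zpowers, Subgroup.orderOf_coe, hc, hZ])
      rw [← h2, Subgroup.zpowers_le]
      exact c.2
    have hcΩ : (c : G) ∈ auxOmega p N hcomm := by
      refine ⟨Subgroup.zpowers_le.2 hgN c.2, ?_⟩
      have := pow_orderOf_eq_one (c : G)
      rwa [Subgroup.orderOf_coe, hc] at this
    obtain ⟨m, hm⟩ := IsPGroup.iff_card.1 (hG.to_subgroup (auxOmega p N hcomm))
    rw [hm]
    apply pow_dvd_pow
    by_contra hlt
    have hle : Nat.card (auxOmega p N hcomm) ≤ Nat.card Z := by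
      rw [hm, hZ]
      calc p ^ m ≤ p ^ 1 := Nat.pow_le_pow_right hp.out.pos (by omega)
        _ = p := pow_one p
    exact hcZ (Subgroup.eq_of_le_of_card_ge hZΩ hle ▸ hcΩ)
  · -- the quotient is not cyclic
    have hlt : Nat.card (G ⧸ Z) < n := by
      have h1 := Subgroup.card_mul_index Z
      have h2 : Nat.card (G ⧸ Z) = Z.index := rfl
      have h3 : 0 < Z.index := Nat.pos_of_ne_zero Subgroup.index_ne_zero_of_finite
      rw [h2, ← hn, ← h1, hZ]
      nlinarith [hp.out.one_lt]
    have hfr : N.map π ≤ frattini (G ⧸ Z) := by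
      rw [Subgroup.map_le_iff_le_comap]
      exact hNΦ.trans (frattini_le_comap_frattini_of_surjective hπ)
    obtain ⟨E, hEN, hEn, hEc, hEcyc⟩ := ih _ hlt rfl (hG.to_quotient Z) (N.map π) hNm hfr hcyc
    let K := E.comap π
    have hKn : K.Normal := hEn.comap π
    have hKc : Nat.card K = p * p ^ 2 := (aux_card_comap Z E).trans (by rw [hZ, hEc])
    have hKN : K ≤ N := by
      refine (Subgroup.comap_mono hEN).trans ?_
      rw [Subgroup.comap_map_eq_self]
      simpa [π] using hZN
    have hexp := (not_isCyclic_iff_exponent_eq_prime hp.out hEc).1 hEcyc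
    have hKp : ∀ x ∈ K, x ^ p ∈ Z := by
      intro x hx
      have h1 : (⟨π x, hx⟩ : E) ^ p = 1 := by rw [← hexp]; exact Monoid.pow_exponent_eq_one _
      have h2 : π x ^ p = 1 := congrArg Subtype.val h1
      rw [← map_pow] at h2
      exact (QuotientGroup.eq_one_iff _).1 h2
    obtain ⟨M, hMK, hMn, hMc⟩ := aux_sq hG K (hKc ▸ Dvd.intro_left p rfl)
    by_cases hMcyc : IsCyclic M
    swap
    · exact ⟨M, hMK.trans hKN, hMn, hMc, hMcyc⟩
    have hcent := aux_frattini hG M hMc hMcyc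
    have hcomm : ∀ x ∈ K, ∀ y ∈ K, x * y = y * x := by
      have hcq : Nat.card (K.map (QuotientGroup.mk' M)) = p := by
        have h1 := aux_map_card M K hMK
        rw [hKc, hMc, mul_comm] at h1
        exact (Nat.eq_of_mul_eq_mul_left (pow_pos hp.out.pos 2) h1).symm
      have hcy : IsCyclic (K.map (QuotientGroup.mk' M)) := isCyclic_of_prime_card hcq
      let f : K →* K.map (QuotientGroup.mk' M) := (QuotientGroup.mk' M).subgroupMap K
      intro x hx y hy
      have := commutative_of_cyclic_center_quotient f (fun k hk => by
        rw [Subgroup.mem_center_iff]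
        intro l
        have h1 : (QuotientGroup.mk' M) (k : G) = 1 := congrArg Subtype.val hk
        have h2 : (k : G) ∈ M := (QuotientGroup.eq_one_iff _).1 h1
        exact Subtype.ext (hcent l (hNΦ (hKN l.2)) k h2)) ⟨x, hx⟩ ⟨y, hy⟩
      exact congrArg Subtype.val this
    have hΩn := auxOmega_normal p K hcomm
    refine aux_omega hG N (auxOmega p K hcomm) (fun x hx => hKN hx.1) (fun x hx => hx.2) ?_
    let ψ : K →* Z :=
      { toFun := fun x => ⟨(x : G) ^ p, hKp x x.2⟩
        map_one' := Subtype.ext (one_pow p)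
        map_mul' := fun x y => Subtype.ext (by
          have h : Commute (x : G) (y : G) := hcomm x x.2 y y.2
          exact h.mul_pow p) }
    have hker : ψ.ker.map K.subtype = auxOmega p K hcomm := by
      ext x
      constructor
      · rintro ⟨y, hy, rfl⟩
        exact ⟨y.2, congrArg Subtype.val (show ψ y = 1 from hy)⟩
      · rintro ⟨h1, h2⟩
        exact ⟨⟨x, h1⟩, Subtype.ext h2, rfl⟩
    have h1 := Subgroup.card_mul_index ψ.ker
    rw [hKc] at h1
    have h2 : ψ.ker.index ∣ p := by
      rw [Subgroup.index_ker, ← hZ]; exact Subgroup.card_subgroup_dvd_card _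
    obtain ⟨r, hr⟩ := h2
    have h3 : Nat.card ψ.ker = Nat.card (auxOmega p K hcomm) := by
      rw [← hker]
      exact (Subgroup.card_map_of_injective K.subtype_injective).symm
    rw [← h3]
    have hpos : 0 < ψ.ker.index := Nat.pos_of_ne_zero Subgroup.index_ne_zero_of_finite
    refine ⟨r, Nat.eq_of_mul_eq_mul_right hpos ?_⟩
    rw [h1]
    conv_lhs => rw [hr]
    rw [← hr]
    nth_rewrite 1 [hr]
    ring

theorem aux_lin {p : ℕ} [hp : Fact p.Prime] {V : Type*} [AddCommGroup V] [Module (ZMod p) V]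
    [Finite V] (hV : Nat.card V = p ^ 2) : Nonempty (V ≃+ ZMod p × ZMod p) := by
  have hr : Module.finrank (ZMod p) V = 2 := by
    have h1 := Module.natCard_eq_pow_finrank (K := ZMod p) (V := V)
    rw [Nat.card_zmod, hV] at h1
    exact (Nat.pow_right_injective hp.out.two_le h1).symm
  have e : V ≃ₗ[ZMod p] (ZMod p × ZMod p) :=
    LinearEquiv.ofFinrankEq _ _ (by rw [hr]; simp)
  exact ⟨e.toAddEquiv⟩

theorem aux_iso_comm {p : ℕ} [hp : Fact p.Prime] {H : Type*} [CommGroup H] [Finite H]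
    (hH : Nat.card H = p ^ 2) (hc : ¬ IsCyclic H) :
    Nonempty (H ≃* Multiplicative (ZMod p) × Multiplicative (ZMod p)) := by
  have hexp := (not_isCyclic_iff_exponent_eq_prime hp.out hH).1 hc
  let m : Module (ZMod p) (Additive H) := AddCommGroup.zmodModule (n := p) (fun x => by
    have : (Additive.toMul x) ^ p = 1 := by
      conv_lhs => rw [← hexp]
      exact Monoid.pow_exponent_eq_one _
    exact this)
  obtain ⟨e⟩ := aux_lin (p := p) (V := Additive H) hH
  have e1 : H ≃* Multiplicative (ZMod p × ZMod p) := AddEquiv.toMultiplicativeRight e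
  exact ⟨e1.trans (MulEquiv.prodMultiplicative _ _)⟩

theorem aux_iso {p : ℕ} [hp : Fact p.Prime] {H : Type*} [hg : Group H] [Finite H]
    (hH : Nat.card H = p ^ 2) (hc : ¬ IsCyclic H) :
    Nonempty (H ≃* Multiplicative (ZMod p) × Multiplicative (ZMod p)) :=
  @aux_iso_comm p hp H (IsPGroup.commGroupOfCardEqPrimeSq hH) _ hH hc

theorem stmt4 {p : ℕ} (hp : p.Prime) {G : Type*} [Group G] [Finite G]
    (hG : IsPGroup p G) {N : Subgroup G} (hN : N.Normal) (hNΦ : N ≤ frattini G)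
    (h : ¬ ∃ H : Subgroup G, H ≤ N ∧ H.Normal ∧
      Nonempty (↥H ≃* Multiplicative (ZMod p) × Multiplicative (ZMod p))) :
    IsCyclic ↥N := by
  have : Fact p.Prime := ⟨hp⟩
  by_contra hc
  obtain ⟨E, h1, h2, h3, h4⟩ := aux_main _ rfl hG N hN hNΦ hc
  exact h ⟨E, h1, h2, aux_iso h3 h4⟩
end

section
/- Let G be a finite p-group and let N be a normal subgroup of G contained in the Frattini subgroup Φ(G). If the center Z(N) of N is cyclic, then N itself is cyclic. -/
namespace Stmt5Aux

variable {p : ℕ} {G : Type*} [Group G]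

open Subgroup

lemma mem_zpowers_zpow (hp : p.Prime) (hG : IsPGroup p G) (a : G) {j : ℤ}
    (hj : ¬ (p : ℤ) ∣ j) : a ∈ zpowers (a ^ j) := by
  rw [mem_zpowers_zpow_iff]
  have := Fact.mk hp
  obtain ⟨k, hk⟩ := (IsPGroup.iff_orderOf.1 hG) a
  rw [hk]
  have h1 : IsCoprime (p : ℤ) j :=
    (Prime.coprime_iff_not_dvd (Nat.prime_iff_prime_int.1 hp)).2 hj
  have h2 : IsCoprime j ((p : ℤ) ^ k) := h1.symm.pow_right
  have h3 := Int.isCoprime_iff_gcd_eq_one.1 h2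
  exact_mod_cast h3

lemma eq_one_of_mem_zpowers_pow (hp : p.Prime) (hG : IsPGroup p G) {b : G}
    (hb : b ∈ zpowers (b ^ p)) : b = 1 := by
  by_contra h
  have := Fact.mk hp
  rw [mem_zpowers_pow_iff] at hb
  have h2 : p ∣ p.gcd (orderOf b) := Nat.dvd_gcd dvd_rfl (hG.dvd_orderOf h)
  rw [hb] at h2
  exact hp.one_lt.ne' (Nat.dvd_one.1 h2)

lemma mem_or_mem_pow_of_mem (hp : p.Prime) (hG : IsPGroup p G) {x y : G}
    (h : x ∈ zpowers y) : y ∈ zpowers x ∨ x ∈ zpowers (y ^ p) := by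
  obtain ⟨m, rfl⟩ := mem_zpowers_iff.1 h
  by_cases hm : (p : ℤ) ∣ m
  · right
    obtain ⟨i, rfl⟩ := hm
    exact ⟨i, by simp [zpow_mul]⟩
  · exact Or.inl (mem_zpowers_zpow hp hG y hm)

lemma exists_zpowers_eq (hp : p.Prime) (hG : IsPGroup p G) (c : G) {x : G}
    (hx : x ∈ zpowers c) : ∃ s : ℕ, zpowers x = zpowers (c ^ p ^ s) := by
  obtain ⟨m, rfl⟩ := mem_zpowers_iff.1 hx
  by_cases hm : m = 0
  · obtain ⟨k, hk⟩ := hG c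
    exact ⟨k, by simp [hm, hk]⟩
  · have hfin : FiniteMultiplicity (p : ℤ) m := by
      rw [Int.finiteMultiplicity_iff]
      exact ⟨by simpa using hp.one_lt.ne', hm⟩
    obtain ⟨u, hu, hnu⟩ := hfin.exists_eq_pow_mul_and_not_dvd
    refine ⟨multiplicity (p : ℤ) m, ?_⟩
    set s := multiplicity (p : ℤ) m
    have h1 : c ^ m = (c ^ p ^ s) ^ u := by
      rw [hu, zpow_mul]; norm_cast
    rw [h1]
    apply le_antisymm
    · rw [zpowers_le]; exact zpow_mem_zpowers _ _
    · rw [zpowers_le]; exact mem_zpowers_zpow hp hG _ hnu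

lemma chain (hp : p.Prime) (hG : IsPGroup p G) {c x y : G}
    (hx : x ∈ zpowers c) (hy : y ∈ zpowers c) : y ∈ zpowers x ∨ x ∈ zpowers (y ^ p) := by
  obtain ⟨s, hs⟩ := exists_zpowers_eq hp hG c hx
  obtain ⟨t, ht⟩ := exists_zpowers_eq hp hG c hy
  rcases le_total s t with h | h
  · left
    rw [← zpowers_le, hs, ht, zpowers_le]
    obtain ⟨d, rfl⟩ := Nat.exists_eq_add_of_le h
    rw [pow_add, pow_mul]
    exact npow_mem_zpowers _ _
  · apply mem_or_mem_pow_of_mem hp hG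
    rw [← zpowers_le, hs, ht, zpowers_le]
    obtain ⟨d, rfl⟩ := Nat.exists_eq_add_of_le h
    rw [pow_add, pow_mul]
    exact npow_mem_zpowers _ _

/-- last power outside -/
lemma exists_pow_notMem (hG : IsPGroup p G) (K : Subgroup G) {x : G} (hx : x ∉ K) :
    ∃ s : ℕ, x ^ s ∉ K ∧ (x ^ s) ^ p ∈ K := by
  classical
  have hex : ∃ m, x ^ p ^ m ∈ K := by
    obtain ⟨k, hk⟩ := hG x
    exact ⟨k, by rw [hk]; exact K.one_mem⟩
  have h1 := Nat.find_spec hex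
  have h0 : Nat.find hex ≠ 0 := by
    intro h
    rw [h] at h1
    simp at h1
    exact hx h1
  obtain ⟨m, hm⟩ := Nat.exists_eq_succ_of_ne_zero h0
  refine ⟨p ^ m, Nat.find_min hex (by omega), ?_⟩
  rw [← pow_mul, ← pow_succ, ← Nat.succ_eq_add_one, ← hm]
  exact h1

lemma exists_central [Finite G] (hp : p.Prime) (hG : IsPGroup p G) (N : Subgroup G)
    (hN : N.Normal) (h : N ≠ ⊥) : ∃ x ∈ N, x ≠ 1 ∧ ∀ g : G, g * x * g⁻¹ = x := by
  have := Fact.mk hp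
  have hd : p ∣ Nat.card N := by
    rcases (hG.to_subgroup N).card_eq_or_dvd with h1 | h1
    · exact absurd (Subgroup.card_eq_one.1 h1) h
    · exact h1
  obtain ⟨b, hb, hb1⟩ := (hG.of_equiv ConjAct.toConjAct).exists_fixed_point_of_prime_dvd_card_of_fixed_point
    N hd (a := 1) (by intro g; simp)
  refine ⟨b, b.2, fun h => hb1 (Subtype.ext h.symm), fun g => ?_⟩
  have := congrArg Subtype.val (hb (ConjAct.toConjAct g))
  exact this

lemma exists_step [Finite G] (hp : p.Prime) (hG : IsPGroup p G) (K N : Subgroup G)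
    (hK : K.Normal) (hN : N.Normal) (h : ¬ N ≤ K) :
    ∃ y ∈ N, y ∉ K ∧ y ^ p ∈ K ∧ ∀ g : G, g * y * g⁻¹ * y⁻¹ ∈ K := by
  have hN' : (N.map (QuotientGroup.mk' K)).Normal := hN.map _ (QuotientGroup.mk'_surjective K)
  obtain ⟨x, hx, hx1, hxc⟩ := exists_central hp (hG.to_quotient K) _ hN' (by
    intro hb
    rw [Subgroup.map_eq_bot_iff, QuotientGroup.ker_mk'] at hb
    exact h hb)
  obtain ⟨x, hxN, rfl⟩ := hx
  have hxK : x ∉ K := by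
    intro h
    exact hx1 ((QuotientGroup.eq_one_iff x).2 h)
  obtain ⟨s, hs, hsp⟩ := exists_pow_notMem hG K hxK
  refine ⟨x ^ s, N.pow_mem hxN s, hs, hsp, fun g => ?_⟩
  rw [← QuotientGroup.eq_one_iff]
  have := hxc (g : G ⧸ K)
  simp only [QuotientGroup.mk'_apply] at this
  rw [← conj_pow, QuotientGroup.mk_mul, QuotientGroup.mk_inv, QuotientGroup.mk_pow,
    QuotientGroup.mk_pow, QuotientGroup.mk_mul, QuotientGroup.mk_mul, QuotientGroup.mk_inv, this,
    mul_inv_cancel]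

/-- a noncyclic abelian subgroup has a socle that is not cyclic -/
lemma exists_socle [Finite G] (hp : p.Prime) (hG : IsPGroup p G) (A : Subgroup G)
    (hA : ∀ x ∈ A, ∀ y ∈ A, x * y = y * x) (hnc : ¬ IsCyclic A) {z : G} (hz : z ^ p = 1) :
    ∃ x ∈ A, x ^ p = 1 ∧ x ∉ zpowers z := by
  by_contra! hcon
  obtain ⟨a, haA, hmax⟩ := (Set.toFinite (A : Set G)).exists_maximalFor (fun a => zpowers a) _
    ⟨1, A.one_mem⟩
  have hne : ¬ A ≤ zpowers a := by
    intro h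
    exact hnc (Subgroup.isCyclic_of_le h)
  obtain ⟨y0, hy0, hy0a⟩ := SetLike.not_le_iff_exists.1 hne
  obtain ⟨s, hs, hsp⟩ := exists_pow_notMem hG _ hy0a
  set y := y0 ^ s with hy
  have hyA : y ∈ A := A.pow_mem hy0 s
  obtain ⟨j, hj⟩ := mem_zpowers_iff.1 hsp
  by_cases hpj : (p : ℤ) ∣ j
  · obtain ⟨i, rfl⟩ := hpj
    have hcomm : Commute y (a ^ i) := hA _ hyA _ (A.zpow_mem haA i)
    have hw : (y * (a ^ i)⁻¹) ^ p = 1 := by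
      rw [hcomm.inv_right.mul_pow, ← hj, inv_pow, mul_comm (p : ℤ) i, zpow_mul, zpow_natCast,
        mul_inv_cancel]
    have hwa : y * (a ^ i)⁻¹ ∉ zpowers a := by
      rw [Subgroup.mul_mem_cancel_right]
      · exact hs
      · exact inv_mem (zpow_mem_zpowers _ _)
    have hwz := hcon _ (A.mul_mem hyA (A.inv_mem (A.zpow_mem haA i))) hw
    have ha1 : a ∉ (⊥ : Subgroup G) := by
      intro h1
      rw [Subgroup.mem_bot] at h1
      have := hmax hyA (by simp [h1])
      exact hs (this (mem_zpowers y))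
    obtain ⟨t, ht, htp⟩ := exists_pow_notMem hG _ ha1
    rw [Subgroup.mem_bot] at ht htp
    have hbz := hcon _ (A.pow_mem haA t) htp
    rcases mem_or_mem_pow_of_mem hp hG hbz with h | h
    · have hz' : z ∈ zpowers a := (zpowers_le.2 (npow_mem_zpowers a t)) h
      exact hwa ((zpowers_le.2 hz') hwz)
    · rw [hz] at h
      simp at h
      exact ht h
  · have h1 : a ∈ zpowers y := by
      have := mem_zpowers_zpow hp hG a hpj
      rw [hj] at this
      exact (zpowers_le.2 (npow_mem_zpowers y p)) this
    exact hs (hmax hyA (zpowers_le.2 h1) (mem_zpowers y))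

lemma frattini_le_ker {H : Type*} [Group H] (f : G →* H) (hH : Nat.card H = 1 ∨ (Nat.card H).Prime) :
    frattini G ≤ f.ker := by
  have : f.range = ⊥ ∨ (Function.Surjective f ∧ (Nat.card H).Prime) := by
    rcases hH with h | h
    · left
      have := (Nat.card_eq_one_iff_unique.1 h).1
      exact Subsingleton.elim _ _
    · have := Fact.mk h
      rcases Subgroup.eq_bot_or_eq_top_of_prime_card f.range with h1 | h1
      · exact Or.inl h1
      · exact Or.inr ⟨MonoidHom.range_eq_top.1 h1, h⟩
  rcases this with h | ⟨hs, h⟩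
  · rw [MonoidHom.range_eq_bot_iff] at h
    rw [h]; simp
  · apply frattini_le_coatom
    have := Fact.mk h
    have hb : IsCoatom (⊥ : Subgroup H) := by
      have : Finite H := Nat.finite_of_card_ne_zero h.ne_zero
      have : Nontrivial H := Finite.one_lt_card_iff_nontrivial.1 h.one_lt
      refine ⟨bot_ne_top, fun M hM => ?_⟩
      exact (Subgroup.eq_bot_or_eq_top_of_prime_card M).resolve_left hM.ne'
    exact isCoatom_comap_of_surjective hs hb

lemma frattini_comm (hp : p.Prime) {y z : G} (hz : z ^ p = 1) (hzc : ∀ g : G, g * z = z * g)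
    (hy : ∀ g : G, g * y * g⁻¹ * y⁻¹ ∈ zpowers z) {n : G} (hn : n ∈ frattini G) :
    n * y = y * n := by
  have hzc' : ∀ (g : G) (w : zpowers z), g * (w : G) = w * g := by
    rintro g ⟨w, m, rfl⟩
    exact (Commute.zpow_right (hzc g) m)
  let f : G →* zpowers z := 
    { toFun := fun g => ⟨_, hy g⟩
      map_one' := by ext; simp
      map_mul' := by
        intro g h
        ext
        have h1 := hzc' g ⟨_, hy h⟩
        have h2 := hzc' (g * y * g⁻¹ * y⁻¹) ⟨_, hy h⟩
        simp only [Subgroup.coe_mul] at h1 h2 ⊢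
        rw [h2]
        calc g * h * y * (g * h)⁻¹ * y⁻¹ = (g * (h * y * h⁻¹ * y⁻¹)) * y * g⁻¹ * y⁻¹ := by group
          _ = _ := by rw [h1]; group }
  have hcard : Nat.card (zpowers z) = 1 ∨ (Nat.card (zpowers z)).Prime := by
    rw [Nat.card_zpowers]
    rcases (Nat.dvd_prime hp).1 (orderOf_dvd_of_pow_eq_one hz) with h | h
    · exact Or.inl h
    · right; rw [h]; exact hp
  have h := frattini_le_ker f hcard hn
  rw [MonoidHom.mem_ker] at h
  have h' : n * y * n⁻¹ * y⁻¹ = 1 := congrArg Subtype.val h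
  rw [mul_inv_eq_one, mul_inv_eq_iff_eq_mul] at h'
  exact h'

lemma conj_mem_pow (hp : p.Prime) (hG : IsPGroup p G) {a : G} (ha : (zpowers a).Normal) (g : G) :
    g * a * g⁻¹ * a⁻¹ ∈ zpowers (a ^ p) := by
  have := Fact.mk hp
  by_cases ha1 : a = 1
  · subst ha1; simp
  obtain ⟨k, hk⟩ := mem_zpowers_iff.1 (ha.conj_mem a (mem_zpowers a) g)
  have hit : ∀ m : ℕ, g ^ m * a * (g ^ m)⁻¹ = a ^ (k ^ m) := by
    intro m
    induction m with
    | zero => simp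
    | succ m ih =>
      calc g ^ (m+1) * a * (g ^ (m+1))⁻¹ = g * (g ^ m * a * (g ^ m)⁻¹) * g⁻¹ := by
            rw [pow_succ']; group
        _ = (g * a * g⁻¹) ^ (k ^ m) := by rw [ih, conj_zpow]
        _ = _ := by rw [← hk, ← zpow_mul, pow_succ']
  obtain ⟨m, hm⟩ := hG g
  have h1 := hit (p ^ m)
  rw [hm] at h1
  have h2 : a ^ (k ^ p ^ m - 1) = 1 := by
    rw [zpow_sub, ← h1]; simp
  have h3 : (p : ℤ) ∣ k ^ p ^ m - 1 := 
    (Int.natCast_dvd_natCast.2 (hG.dvd_orderOf ha1)).trans (orderOf_dvd_iff_zpow_eq_one.2 h2)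
  have h4 : (p : ℤ) ∣ k - 1 := by
    rw [← ZMod.intCast_zmod_eq_zero_iff_dvd] at h3 ⊢
    push_cast at h3 ⊢
    rwa [ZMod.pow_card_pow] at h3
  obtain ⟨i, hi⟩ := h4
  refine ⟨i, ?_⟩
  simp only
  rw [← hk, ← zpow_natCast, ← zpow_mul, ← hi, zpow_sub, zpow_one]

lemma normal_zpowers_pow {a : G} (ha : (zpowers a).Normal) (m : ℕ) : (zpowers (a ^ m)).Normal := by
  constructor
  rintro _ ⟨i, rfl⟩ g
  obtain ⟨k, hk⟩ := mem_zpowers_iff.1 (ha.conj_mem a (mem_zpowers a) g)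
  refine ⟨k * i, ?_⟩
  simp only
  rw [← conj_zpow, ← conj_pow, ← hk]
  simp only [← zpow_natCast, ← zpow_mul]
  congr 1
  ring

lemma frattini_comm_cyclic (hp : p.Prime) (hG : IsPGroup p G) {a : G} (ha : (zpowers a).Normal)
    {n : G} (hn : n ∈ frattini G) (hR : (zpowers (a ^ (p * p))).Normal) :
    (n : G ⧸ zpowers (a ^ (p * p))) * a = a * n := by
  set R := zpowers (a ^ (p * p)) with hRd
  have hnQ : (n : G ⧸ R) ∈ frattini (G ⧸ R) :=
    frattini_le_comap_frattini_of_surjective (QuotientGroup.mk'_surjective R) hn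
  refine frattini_comm hp (z := ((a ^ p : G) : G ⧸ R)) ?_ ?_ ?_ hnQ
  · rw [← QuotientGroup.mk_pow, QuotientGroup.eq_one_iff, ← pow_mul]
    exact mem_zpowers _
  · intro g
    obtain ⟨g, rfl⟩ := QuotientGroup.mk_surjective g
    have h := conj_mem_pow hp hG (normal_zpowers_pow ha p) g
    rw [← pow_mul, ← hRd, ← QuotientGroup.eq_one_iff] at h
    rw [QuotientGroup.mk_mul, QuotientGroup.mk_inv, mul_inv_eq_one, QuotientGroup.mk_mul,
      QuotientGroup.mk_inv, mul_inv_eq_iff_eq_mul] at h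
    exact h
  · intro g
    obtain ⟨g, rfl⟩ := QuotientGroup.mk_surjective g
    obtain ⟨i, hi⟩ := mem_zpowers_iff.1 (conj_mem_pow hp hG ha g)
    exact ⟨i, by simp only; rw [← QuotientGroup.mk_zpow, hi]; rfl⟩

lemma abelian_cyclic [Finite G] (hp : p.Prime) (hG : IsPGroup p G) {N A : Subgroup G}
    (hNΦ : N ≤ frattini G) (hZ : IsCyclic (center N)) (hA : A.Normal) (hAN : A ≤ N)
    (hAc : ∀ x ∈ A, ∀ y ∈ A, x * y = y * x) : IsCyclic A := by
  by_contra hnc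
  let Ω : Subgroup G :=
    { carrier := {x | x ∈ A ∧ x ^ p = 1}
      one_mem' := ⟨A.one_mem, one_pow _⟩
      mul_mem' := by
        rintro x y ⟨hx, hx1⟩ ⟨hy, hy1⟩
        refine ⟨A.mul_mem hx hy, ?_⟩
        rw [Commute.mul_pow (hAc x hx y hy), hx1, hy1, one_mul]
      inv_mem' := by
        rintro x ⟨hx, hx1⟩
        exact ⟨A.inv_mem hx, by rw [inv_pow, hx1, inv_one]⟩ }
  have hΩ : Ω.Normal := by
    constructor
    rintro x ⟨hx, hx1⟩ g
    exact ⟨hA.conj_mem x hx g, by rw [conj_pow, hx1]; simp⟩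
  have hne : ∀ z : G, z ^ p = 1 → ¬ Ω ≤ zpowers z := by
    intro z hz hle
    obtain ⟨x, hxA, hx, hxz⟩ := exists_socle hp hG A hAc hnc hz
    exact hxz (hle ⟨hxA, hx⟩)
  obtain ⟨z, hzΩ, hz1, hzc⟩ := exists_central hp hG Ω hΩ (by
    intro h
    apply hne 1 (one_pow _)
    rw [h]; exact bot_le)
  have hzc' : ∀ g : G, g * z = z * g := fun g => mul_inv_eq_iff_eq_mul.1 (hzc g)
  have hKn : (zpowers z).Normal := by
    constructor
    rintro _ ⟨i, rfl⟩ g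
    refine ⟨i, ?_⟩
    simp only
    rw [← conj_zpow, hzc]
  obtain ⟨y, hyΩ, hyz, -, hyc⟩ := exists_step hp hG (zpowers z) Ω hKn hΩ (hne z hzΩ.2)
  have hyN : (⟨y, hAN hyΩ.1⟩ : N) ∈ center N := by
    rw [Subgroup.mem_center_iff]
    intro n
    ext
    exact frattini_comm hp hzΩ.2 hzc' hyc (hNΦ n.2)
  have hzN : (⟨z, hAN hzΩ.1⟩ : N) ∈ center N := by
    rw [Subgroup.mem_center_iff]
    intro n
    ext
    exact hzc' n
  obtain ⟨c, hc⟩ := hZ.exists_generator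
  have hcz := hc ⟨_, hzN⟩
  have hcy := hc ⟨_, hyN⟩
  have hmz : z ∈ zpowers ((c : N) : G) := by
    obtain ⟨i, hi⟩ := mem_zpowers_iff.1 hcz
    exact ⟨i, by simpa using congrArg (fun x : center N => ((x : N) : G)) hi⟩
  have hmy : y ∈ zpowers ((c : N) : G) := by
    obtain ⟨i, hi⟩ := mem_zpowers_iff.1 hcy
    exact ⟨i, by simpa using congrArg (fun x : center N => ((x : N) : G)) hi⟩
  rcases chain hp hG hmz hmy with h | h
  · exact hyz h
  · rw [hyΩ.2] at h
    simp at h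
    exact hz1 h

theorem main [Finite G] (hp : p.Prime) (hG : IsPGroup p G) : ∀ (N : Subgroup G), N.Normal →
    N ≤ frattini G → IsCyclic (center N) → IsCyclic N := by
  intro N
  induction N using WellFoundedLT.induction with
  | ind N ih =>
  intro hN hNΦ hZ
  by_contra hnc
  have hnab : ¬ ∀ x ∈ N, ∀ y ∈ N, x * y = y * x := fun h =>
    hnc (abelian_cyclic hp hG hNΦ hZ hN le_rfl h)
  have hcyc : ∀ L : Subgroup G, L.Normal → L < N → IsCyclic L := by
    intro L hL hLN
    refine ih L hLN hL (hLN.le.trans hNΦ) ?_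
    have hA : IsCyclic ((center L).map L.subtype) := by
      refine abelian_cyclic hp hG hNΦ hZ ?_ ?_ ?_
      · infer_instance
      · exact (Subgroup.map_subtype_le _).trans hLN.le
      · rintro _ ⟨x, hx, rfl⟩ _ ⟨y, hy, rfl⟩
        have := (Subgroup.mem_center_iff.1 hx y).symm
        exact congrArg Subtype.val this
    exact isCyclic_of_injective
      ((center L).equivMapOfInjective L.subtype L.subtype_injective).toMonoidHom
      (MulEquiv.injective _)
  obtain ⟨K, ⟨hKn, hKN⟩, hmax⟩ := (Set.toFinite {K : Subgroup G | K.Normal ∧ K < N}).exists_maximal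
    ⟨⊥, inferInstance, by
      rw [bot_lt_iff_ne_bot]
      rintro rfl
      exact hnc inferInstance⟩
  obtain ⟨a, rfl⟩ := (Subgroup.isCyclic_iff_exists_zpowers_eq_top K).1 (hcyc K hKn hKN)
  have haN : a ∈ N := hKN.le (mem_zpowers a)
  obtain ⟨y, hyN, hya, hyp, hyc⟩ := exists_step hp hG _ N hKn hN hKN.not_ge
  -- `N` is generated by `a` and `y`
  have hgen : ∀ x ∈ N, ∃ i m : ℤ, x = a ^ i * y ^ m := by
    let M : Subgroup G := (zpowers (y : G ⧸ zpowers a)).comap (QuotientGroup.mk' _)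
    have hMn : M.Normal := by
      apply Subgroup.Normal.comap
      constructor
      rintro _ ⟨i, rfl⟩ g
      obtain ⟨g, rfl⟩ := QuotientGroup.mk_surjective g
      refine ⟨i, ?_⟩
      have h := (QuotientGroup.eq_one_iff _).2 (hyc g)
      rw [QuotientGroup.mk_mul, QuotientGroup.mk_inv, mul_inv_eq_one] at h
      simp only
      rw [← conj_zpow]
      exact congrArg (· ^ i) h.symm
    have hMem : ∀ x ∈ M, ∃ i m : ℤ, x = a ^ i * y ^ m := by
      rintro x ⟨m, hm⟩
      have h : x * (y ^ m)⁻¹ ∈ zpowers a := by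
        rw [← QuotientGroup.eq_one_iff, QuotientGroup.mk_mul, QuotientGroup.mk_inv,
          QuotientGroup.mk_zpow, mul_inv_eq_one]
        exact hm.symm
      obtain ⟨i, hi⟩ := mem_zpowers_iff.1 h
      exact ⟨i, m, by rw [hi]; group⟩
    have hMN : M ≤ N := by
      intro x hx
      obtain ⟨i, m, rfl⟩ := hMem x hx
      exact N.mul_mem (N.zpow_mem haN i) (N.zpow_mem hyN m)
    have hKM : zpowers a ≤ M := by
      intro x hx
      exact ⟨0, by simpa using ((QuotientGroup.eq_one_iff x).2 hx).symm⟩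
    have hyM : y ∈ M := mem_zpowers (y : G ⧸ zpowers a)
    have : ¬ M < N := fun h => hya (hmax ⟨hMn, h⟩ hKM hyM)
    have hMeq : M = N := by
      by_contra h
      exact this (lt_of_le_of_ne hMN h)
    rw [← hMeq]
    exact hMem
  have hgencomm : ∀ {H : Type _} [Group H] (f : G →* H), f y * f a = f a * f y →
      ∀ x ∈ N, ∀ x' ∈ N, Commute (f x) (f x') := by
    intro H _ f hf x hx x' hx'
    obtain ⟨i, m, rfl⟩ := hgen x hx
    obtain ⟨i', m', rfl⟩ := hgen x' hx'
    have h : Commute (f y) (f a) := hf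
    simp only [map_mul, map_zpow]
    refine Commute.mul_left (Commute.mul_right ?_ ?_) (Commute.mul_right ?_ ?_)
    · exact ((Commute.refl _).zpow_zpow _ _)
    · exact h.symm.zpow_zpow _ _
    · exact h.zpow_zpow _ _
    · exact ((Commute.refl _).zpow_zpow _ _)
  have hay : y * a ≠ a * y := by
    intro h
    exact hnab (fun x hx x' hx' => hgencomm (MonoidHom.id G) h x hx x' hx')
  have hRn := normal_zpowers_pow hKn (p * p)
  have hRc := frattini_comm_cyclic hp hG hKn (hNΦ hyN) hRn
  set R := zpowers (a ^ (p * p)) with hR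
  have hNc : ∀ x ∈ N, ∀ x' ∈ N, Commute (x : G ⧸ R) (x' : G ⧸ R) :=
    hgencomm (QuotientGroup.mk' R) hRc
  have hapR : a ^ p ∉ R := by
    intro h
    rw [hR, pow_mul] at h
    have h1 := eq_one_of_mem_zpowers_pow hp hG h
    have h2 := (QuotientGroup.eq_one_iff _).2 (show y * a * (a * y)⁻¹ ∈ R by
      rw [← QuotientGroup.eq_one_iff, QuotientGroup.mk_mul, QuotientGroup.mk_inv, mul_inv_eq_one]
      exact hRc)
    rw [QuotientGroup.eq_one_iff, hR, pow_mul, h1] at h2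
    simp only [one_pow, zpowers_one_eq_bot, Subgroup.mem_bot] at h2
    exact hay (mul_inv_eq_one.1 h2)
  let L : Subgroup G :=
    { carrier := {x | x ∈ N ∧ x ^ p ∈ R}
      one_mem' := ⟨N.one_mem, by rw [one_pow]; exact R.one_mem⟩
      mul_mem' := by
        rintro x x' ⟨hx, hx1⟩ ⟨hx', hx1'⟩
        refine ⟨N.mul_mem hx hx', ?_⟩
        rw [← QuotientGroup.eq_one_iff] at hx1 hx1' ⊢
        rw [QuotientGroup.mk_pow] at hx1 hx1' ⊢
        rw [QuotientGroup.mk_mul, Commute.mul_pow (hNc x hx x' hx'), hx1, hx1', one_mul]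
      inv_mem' := by
        rintro x ⟨hx, hx1⟩
        exact ⟨N.inv_mem hx, by rw [inv_pow]; exact R.inv_mem hx1⟩ }
  have hLn : L.Normal := by
    constructor
    rintro x ⟨hx, hx1⟩ g
    exact ⟨hN.conj_mem x hx g, by rw [conj_pow]; exact hRn.conj_mem _ hx1 g⟩
  have hLN : L < N := by
    refine lt_of_le_of_ne (fun x hx => hx.1) ?_
    intro h
    have : a ∈ L := by rw [h]; exact haN
    exact hapR this.2
  obtain ⟨c, hc⟩ := (Subgroup.isCyclic_iff_exists_zpowers_eq_top L).1 (hcyc L hLn hLN)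
  obtain ⟨j, hj⟩ := mem_zpowers_iff.1 hyp
  by_cases hpj : (p : ℤ) ∣ j
  · obtain ⟨i, rfl⟩ := hpj
    have hzN : y * (a ^ i)⁻¹ ∈ N := N.mul_mem hyN (N.inv_mem (N.zpow_mem haN i))
    have hzL : y * (a ^ i)⁻¹ ∈ L := by
      refine ⟨hzN, ?_⟩
      rw [← QuotientGroup.eq_one_iff, QuotientGroup.mk_pow, QuotientGroup.mk_mul,
        Commute.mul_pow (hNc y hyN (a ^ i)⁻¹ (N.inv_mem (N.zpow_mem haN i))),
        ← QuotientGroup.mk_pow, ← QuotientGroup.mk_pow, ← hj, ← QuotientGroup.mk_mul,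
        inv_pow, mul_comm (p : ℤ) i, zpow_mul, zpow_natCast, mul_inv_cancel]
      rfl
    have hapL : a ^ p ∈ L := ⟨N.pow_mem haN p, by
      rw [← pow_mul]; exact mem_zpowers _⟩
    rw [← hc] at hzL hapL
    rcases chain hp hG hapL hzL with h | h
    · have h1 : y * (a ^ i)⁻¹ ∈ zpowers a := zpowers_le.2 (npow_mem_zpowers a p) h
      rw [Subgroup.mul_mem_cancel_right _ (inv_mem (zpow_mem_zpowers _ _))] at h1
      exact hya h1
    · rw [hc] at hzL
      exact hapR (zpowers_le.2 hzL.2 h)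
  · have h1 := mem_zpowers_zpow hp hG a hpj
    rw [hj] at h1
    obtain ⟨m, hm⟩ := mem_zpowers_iff.1 h1
    apply hay
    rw [← hm]
    exact (((Commute.refl y).pow_right p).zpow_right m)

end Stmt5Aux

theorem stmt5 {p : ℕ} (hp : p.Prime) {G : Type*} [Group G] [Finite G]
    (hG : IsPGroup p G) {N : Subgroup G} (hN : N.Normal) (hNΦ : N ≤ frattini G)
    (hZ : IsCyclic ↥(Subgroup.center ↥N)) :
    IsCyclic ↥N := by
  exact Stmt5Aux.main hp hG N hN hNΦ hZ
end
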